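/- Define $F(\xi) = (Q_1^{\intercal}\widehat{\mathcal{A}}(\xi)^{-1}Q_1)^{-1}$ for $\xi \in (0, 2\pi)$, where $Q_1 = \frac{1}{\sqrt{M}}(1,\dots,1)^{\intercal}$. Then $F$ extends to a real-valued, even ($F(\xi) = F(2\pi - \xi)$), $2\pi$-periodic function that is $C^{\infty}$ on all of $\mathbb{R}$; in particular the apparent singularity at $\xi \in 2\pi\mathbb{Z}$ (where $\widehat{\mathcal{A}}$ is singular) is removable. -/

import Mathlib

open Matrix Complex Real

noncomputable def A0 (M : ℕ) (κ1 κ2 : ℝ) : Matrix (Fin M) (Fin M) ℂ := fun i j =>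
  if (i : ℤ) = (j : ℤ) then 2 * ((κ1 : ℂ) + κ2)
  else if |(i : ℤ) - (j : ℤ)| = 1 then -(κ1 : ℂ)
  else if |(i : ℤ) - (j : ℤ)| = 2 then -(κ2 : ℂ) else 0

noncomputable def A1 (M : ℕ) (κ1 κ2 : ℝ) : Matrix (Fin M) (Fin M) ℂ := fun i j =>
  if (i : ℕ) = 0 ∧ (j : ℕ) = M - 1 then -(κ1 : ℂ)
  else if ((i : ℕ) = 0 ∧ (j : ℕ) = M - 2) ∨ ((i : ℕ) = 1 ∧ (j : ℕ) = M - 1) then -(κ2 : ℂ)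
  else 0

noncomputable def Ahat (M : ℕ) (κ1 κ2 ξ : ℝ) : Matrix (Fin M) (Fin M) ℂ :=
  A0 M κ1 κ2 + Complex.exp (-(ξ : ℂ) * Complex.I) • A1 M κ1 κ2
    + Complex.exp ((ξ : ℂ) * Complex.I) • (A1 M κ1 κ2)ᵀ

noncomputable def q1 (M : ℕ) : Fin M → ℂ := fun _ => (1 / Real.sqrt M : ℝ)

/-!
Let `S` be the unitary shift by one site with Bloch phase `e^{iξ}`. Then `Ahat` is the symbol
`2(κ1 + κ2) - κ1 (S + S*) - κ2 (S² + S*²)`, and this equals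
`(κ1 / 4) |(1 - S)²|² + ((κ1 + 4 κ2) / 4) |1 - S²|²`, where `|X|² = X* X`. Under stability both
coefficients are positive, so `Ahat` is positive semidefinite, and `Ahat v = 0` gives `S v = v`
because `(1 - S)² + (1 - S²) = 2 (1 - S)`. Hence `v` is constant, and zero unless `e^{iξ} = 1`; in
particular `Ahat + q q*` is positive definite for every `ξ`, where `q = q1 M`. Cramer's rule turns
`(q* Ahat⁻¹ q)⁻¹` into `det Ahat / (det (Ahat + q q*) - det Ahat)`, a quotient of smooth functions
whose denominator never vanishes: with `B = Ahat + q q*` it is `det B · (q* B⁻¹ q) > 0`.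
-/

section StarAlgebra

variable {R : Type*} [Ring R] [StarRing R]

lemma star_one_sub_mul_one_sub_of_isometry {S : R} (hS : star S * S = 1) :
    star (1 - S) * (1 - S) = 2 • 1 - (S + star S) := by
  rw [star_sub, star_one, sub_mul, mul_sub, mul_sub, hS]
  noncomm_ring

lemma star_sq_one_sub_mul_sq_one_sub_of_isometry {S : R} (hS : star S * S = 1) :
    star ((1 - S) ^ 2) * (1 - S) ^ 2 = 6 • 1 - 4 • (S + star S) + (S ^ 2 + star (S ^ 2)) := by
  set D := 1 - S with hD
  have hDS : star D * S = -D := by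
    rw [hD, star_sub, star_one, sub_mul, hS, one_mul, neg_sub]
  have hSD : star S * D = -star D := by
    rw [hD, star_sub, star_one, mul_sub, hS, mul_one, neg_sub]
  calc star (D ^ 2) * D ^ 2
      = star D * (star D * D) * D := by rw [star_pow]; noncomm_ring
    _ = star D * (2 • 1 - (S + star S)) * D := by rw [star_one_sub_mul_one_sub_of_isometry hS]
    _ = 2 • (star D * D) - star D * S * D - star D * (star S * D) := by noncomm_ring
    _ = 2 • (2 • 1 - (S + star S)) + D ^ 2 + star D ^ 2 := by
        rw [star_one_sub_mul_one_sub_of_isometry hS, hDS, hSD]; noncomm_ring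
    _ = 6 • 1 - 4 • (S + star S) + (S ^ 2 + star (S ^ 2)) := by
        rw [hD, star_sub, star_one, star_pow]; noncomm_ring

lemma isometry_symbol_eq_sum_star_mul_self {K : Type*} [Field K] [CharZero K] [Algebra K R] {S : R}
    (hS : star S * S = 1) (a b : K) :
    (2 * (a + b)) • (1 : R) - a • (S + star S) - b • (S ^ 2 + star (S ^ 2)) =
      (a / 4) • (star ((1 - S) ^ 2) * (1 - S) ^ 2)
        + ((a + 4 * b) / 4) • (star (1 - S ^ 2) * (1 - S ^ 2)) := by
  have hS2 : star (S ^ 2) * S ^ 2 = 1 := by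
    rw [star_pow, pow_two, pow_two, mul_assoc, ← mul_assoc _ S S, hS, one_mul, hS]
  rw [star_sq_one_sub_mul_sq_one_sub_of_isometry hS, star_one_sub_mul_one_sub_of_isometry hS2]
  module

end StarAlgebra

section CramerQuotient

open scoped ComplexOrder

variable {n 𝕜 : Type*} [Fintype n] [RCLike 𝕜]

lemma mulVec_add_eq_zero_iff_of_posSemidef {A B : Matrix n n 𝕜} (hA : A.PosSemidef)
    (hB : B.PosSemidef) (v : n → 𝕜) : (A + B) *ᵥ v = 0 ↔ A *ᵥ v = 0 ∧ B *ᵥ v = 0 := by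
  rw [← (hA.add hB).dotProduct_mulVec_zero_iff, ← hA.dotProduct_mulVec_zero_iff,
    ← hB.dotProduct_mulVec_zero_iff, add_mulVec, dotProduct_add]
  exact add_eq_zero_iff_of_nonneg (hA.dotProduct_mulVec_nonneg v) (hB.dotProduct_mulVec_nonneg v)

lemma posDef_add_vecMulVec_star {A : Matrix n n 𝕜} {q : n → 𝕜} (hA : A.PosSemidef)
    (h : ∀ v, A *ᵥ v = 0 → star q ⬝ᵥ v = 0 → v = 0) :
    (A + vecMulVec q (star q)).PosDef := by
  classical
  have hQ := posSemidef_vecMulVec_self_star q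
  rw [(hA.add hQ).posDef_iff_isUnit, isUnit_iff_isUnit_det, isUnit_iff_ne_zero, Ne,
    ← exists_mulVec_eq_zero_iff]
  rintro ⟨v, hv, hv0⟩
  obtain ⟨hAv, hQv⟩ := (mulVec_add_eq_zero_iff_of_posSemidef hA hQ v).mp hv0
  rw [vecMulVec_mulVec, op_smul_eq_smul, smul_eq_zero] at hQv
  refine hv (h v hAv (hQv.elim id fun hq => ?_))
  simp [hq]

variable [DecidableEq n]

lemma det_add_vecMulVec {R : Type*} [CommRing R] {A : Matrix n n R} (hA : IsUnit A.det)
    (u v : n → R) : (A + vecMulVec u v).det = A.det * (1 + v ⬝ᵥ A⁻¹ *ᵥ u) := by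
  rw [vecMulVec_eq Unit, det_add_replicateCol_mul_replicateRow hA, Matrix.mul_assoc,
    ← replicateCol_mulVec, det_unique (n := Unit), Matrix.add_apply, one_apply_eq,
    replicateRow_mul_replicateCol_apply]

lemma det_lt_det_add_vecMulVec_star {A : Matrix n n 𝕜} {q : n → 𝕜} (hq : q ≠ 0)
    (hB : (A + vecMulVec q (star q)).PosDef) : A.det < (A + vecMulVec q (star q)).det := by
  set B := A + vecMulVec q (star q) with hBA
  have hA : A = B + vecMulVec (-q) (star q) := by
    rw [hBA, neg_vecMulVec, add_neg_cancel_right]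
  have hdet : A.det = B.det * (1 - star q ⬝ᵥ B⁻¹ *ᵥ q) := by
    rw [hA, det_add_vecMulVec ((isUnit_iff_isUnit_det _).mp hB.isUnit), mulVec_neg, dotProduct_neg,
      sub_eq_add_neg]
  have hpos : 0 < B.det * (star q ⬝ᵥ B⁻¹ *ᵥ q) :=
    mul_pos hB.det_pos (hB.inv.dotProduct_mulVec_pos hq)
  rw [hdet, mul_one_sub]
  exact sub_lt_self _ hpos

/-- The quotient `det A / (q* adj(A) q)`, to which `(q* A⁻¹ q)⁻¹` is equal by Cramer's rule but
which can stay meaningful where `A` is singular. The denominator is written through the matrix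
determinant lemma `det (A + q q*) = det A + q* adj(A) q`. -/
noncomputable def cramerQuotient (A : Matrix n n 𝕜) (q : n → 𝕜) : 𝕜 :=
  A.det / ((A + vecMulVec q (star q)).det - A.det)

lemma inv_dotProduct_inv_mulVec_eq_cramerQuotient {A : Matrix n n 𝕜} (hA : A.det ≠ 0)
    (q : n → 𝕜) : (star q ⬝ᵥ A⁻¹ *ᵥ q)⁻¹ = cramerQuotient A q := by
  rw [cramerQuotient, det_add_vecMulVec hA.isUnit, mul_one_add, add_sub_cancel_left,
    div_mul_cancel_left₀ hA]

lemma cramerQuotient_transpose (A : Matrix n n 𝕜) (q : n → 𝕜) :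
    cramerQuotient Aᵀ (star q) = cramerQuotient A q := by
  rw [cramerQuotient, cramerQuotient, star_star, ← det_transpose (A + _), transpose_add,
    transpose_vecMulVec, det_transpose A]

lemma cramerQuotient_nonneg {A : Matrix n n 𝕜} {q : n → 𝕜} (hA : A.PosSemidef) (hq : q ≠ 0)
    (hB : (A + vecMulVec q (star q)).PosDef) : 0 ≤ cramerQuotient A q :=
  div_nonneg hA.det_nonneg (sub_pos.mpr (det_lt_det_add_vecMulVec_star hq hB)).le

variable {E : Type*} [NormedAddCommGroup E] [NormedSpace ℝ E] {k : WithTop ℕ∞}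

lemma contDiff_det {A : E → Matrix n n 𝕜} (hA : ∀ i j, ContDiff ℝ k fun x => A x i j) :
    ContDiff ℝ k fun x => (A x).det := by
  simp only [det_apply']
  exact ContDiff.sum fun σ _ => contDiff_const.mul (contDiff_prod fun i _ => hA _ _)

lemma contDiff_cramerQuotient {A : E → Matrix n n 𝕜} {q : n → 𝕜}
    (hA : ∀ i j, ContDiff ℝ k fun x => A x i j) (hq : q ≠ 0)
    (hB : ∀ x, (A x + vecMulVec q (star q)).PosDef) :
    ContDiff ℝ k fun x => cramerQuotient (A x) q := by
  have hdet : ContDiff ℝ k fun x => (A x).det := contDiff_det hA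
  have hdetB : ContDiff ℝ k fun x => (A x + vecMulVec q (star q)).det :=
    contDiff_det fun i j => (hA i j).add contDiff_const
  have hne : ∀ x, (A x + vecMulVec q (star q)).det - (A x).det ≠ 0 := fun x =>
    (sub_pos.mpr (det_lt_det_add_vecMulVec_star hq (hB x))).ne'
  simp only [cramerQuotient, div_eq_mul_inv]
  exact hdet.mul ((hdetB.sub hdet).inv hne)

end CramerQuotient

section BlochShift

variable {R : Type*} [CommRing R]

/-- The shift by `k ≤ M` sites along a chain with unit cell `Fin M`, acting on the Bloch waves
`v (i + M) = z * v i`: row `i` reads off `v (i + k)`, which is `z * v (i + k - M)` when the shift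
leaves the cell. The second condition is written with `j + M` to avoid truncated subtraction. -/
def blochShift (M k : ℕ) (z : R) : Matrix (Fin M) (Fin M) R := fun i j =>
  (if (i : ℕ) + k = j then 1 else 0) + z * (if (i : ℕ) + k = j + M then 1 else 0)

variable {M : ℕ} {z : R}

lemma blochShift_one_mulVec (v : Fin M → R) (i : Fin M) :
    (blochShift M 1 z *ᵥ v) i =
      if h : (i : ℕ) + 1 < M then v ⟨i + 1, h⟩ else z * v ⟨0, i.pos⟩ := by
  have hi := i.isLt
  split_ifs with h
  · have entry (j : Fin M) : blochShift M 1 z i j = if j = ⟨i + 1, h⟩ then 1 else 0 := by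
      have hwrap : (i : ℕ) + 1 ≠ j + M := by omega
      simp [blochShift, hwrap, Fin.ext_iff, eq_comm]
    simp [mulVec, dotProduct, entry]
  · have entry (j : Fin M) : blochShift M 1 z i j = if j = ⟨0, i.pos⟩ then z else 0 := by
      have hstay : (i : ℕ) + 1 ≠ j := by omega
      have hwrap : (i : ℕ) + 1 = j + M ↔ (j : ℕ) = 0 := by omega
      simp [blochShift, hstay, hwrap, Fin.ext_iff]
    simp [mulVec, dotProduct, entry]

lemma blochShift_one_mul_apply (X : Matrix (Fin M) (Fin M) R) (i j : Fin M) :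
    (blochShift M 1 z * X) i j =
      if h : (i : ℕ) + 1 < M then X ⟨i + 1, h⟩ j else z * X ⟨0, i.pos⟩ j :=
  blochShift_one_mulVec (fun l => X l j) i

lemma blochShift_one_mul {k : ℕ} (hk : k < M) :
    blochShift M 1 z * blochShift M k z = blochShift M (k + 1) z := by
  ext i j
  have hi := i.isLt
  rw [blochShift_one_mul_apply]
  simp only [blochShift]
  split_ifs <;> first | omega | simp

lemma blochShift_one_sq (hM : 2 ≤ M) : blochShift M 1 z ^ 2 = blochShift M 2 z := by
  rw [pow_two, blochShift_one_mul (by omega)]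

lemma star_blochShift_one_mul_self [StarRing R] (hz : z * star z = 1) :
    star (blochShift M 1 z) * blochShift M 1 z = 1 := by
  rw [mul_eq_one_comm]
  ext i j
  have hi := i.isLt
  rw [blochShift_one_mul_apply]
  simp only [star_apply, blochShift, one_apply, Fin.ext_iff, star_add, star_mul', apply_ite star,
    star_one, star_zero]
  split_ifs <;> first | contradiction | omega | simp [hz]

lemma apply_eq_apply_zero_of_blochShift_one_mulVec_eq {v : Fin M → R}
    (hv : blochShift M 1 z *ᵥ v = v) (i : Fin M) : v i = v ⟨0, i.pos⟩ := by
  obtain ⟨i, hi⟩ := i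
  induction i with
  | zero => rfl
  | succ i ih =>
    rw [← ih (by omega), ← congrFun hv ⟨i, by omega⟩, blochShift_one_mulVec, dif_pos hi]

lemma eq_zero_of_blochShift_one_mulVec_eq [IsDomain R] {v : Fin M → R} (hz : z ≠ 1)
    (hv : blochShift M 1 z *ᵥ v = v) : v = 0 := by
  ext i
  have hconst := apply_eq_apply_zero_of_blochShift_one_mulVec_eq hv
  have hlast : z * v ⟨0, i.pos⟩ = v ⟨0, i.pos⟩ := by
    have hM := i.pos
    have h := congrFun hv ⟨M - 1, by omega⟩
    rwa [blochShift_one_mulVec, dif_neg (show ¬ M - 1 + 1 < M by omega), hconst ⟨M - 1, _⟩] at h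
  rw [hconst i]
  exact (mul_left_eq_self₀.mp hlast).resolve_left hz

end BlochShift

section Ahat

open scoped ComplexOrder

variable {M : ℕ} {κ1 κ2 : ℝ}

lemma A0_apply (i j : Fin M) :
    A0 M κ1 κ2 i j = 2 * (κ1 + κ2) * (if i = j then 1 else 0)
      - κ1 * ((if (i : ℕ) + 1 = j then 1 else 0) + if (j : ℕ) + 1 = i then 1 else 0)
      - κ2 * ((if (i : ℕ) + 2 = j then 1 else 0) + if (j : ℕ) + 2 = i then 1 else 0) := by
  have h1 : |(i : ℤ) - j| = 1 ↔ (i : ℕ) + 1 = j ∨ (j : ℕ) + 1 = i := by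
    rw [abs_eq one_pos.le]; omega
  have h2 : |(i : ℤ) - j| = 2 ↔ (i : ℕ) + 2 = j ∨ (j : ℕ) + 2 = i := by
    rw [abs_eq two_pos.le]; omega
  simp only [A0, h1, h2, Nat.cast_inj, Fin.ext_iff]
  split_ifs <;> first | omega | simp

lemma A1_apply (hM : 2 ≤ M) (i j : Fin M) :
    A1 M κ1 κ2 i j = -κ1 * (if (j : ℕ) + 1 = i + M then 1 else 0)
      - κ2 * (if (j : ℕ) + 2 = i + M then 1 else 0) := by
  simp only [A1]
  split_ifs <;> first | omega | simp

lemma A0_transpose : (A0 M κ1 κ2)ᵀ = A0 M κ1 κ2 := by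
  ext i j
  simp only [transpose_apply, A0_apply, eq_comm (a := j) (b := i)]
  ring

lemma exp_neg_mul_I_eq_star (ξ : ℝ) : cexp (-(ξ : ℂ) * I) = star (cexp (ξ * I)) := by
  simp [← Complex.exp_conj]

lemma exp_mul_I_mul_star_self (ξ : ℝ) : cexp (ξ * I) * star (cexp (ξ * I)) = 1 := by
  rw [← exp_neg_mul_I_eq_star, ← Complex.exp_add]
  simp

lemma exp_mul_I_ne_one_of_mem_Ioo {ξ : ℝ} (hξ : ξ ∈ Set.Ioo 0 (2 * π)) : cexp (ξ * I) ≠ 1 :=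
  fun h => by
    have hcos : Real.cos ξ = 1 := by rw [← Complex.exp_ofReal_mul_I_re, h, Complex.one_re]
    exact hξ.1.ne' <| (Real.cos_eq_one_iff_of_lt_of_lt (by linarith [hξ.1, hξ.2]) hξ.2).mp hcos

lemma Ahat_eq_blochShift (hM : 2 ≤ M) (ξ : ℝ) :
    Ahat M κ1 κ2 ξ = (2 * (κ1 + κ2) : ℂ) • 1
      - (κ1 : ℂ) • (blochShift M 1 (cexp (ξ * I)) + star (blochShift M 1 (cexp (ξ * I))))
      - (κ2 : ℂ) • (blochShift M 1 (cexp (ξ * I)) ^ 2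
          + star (blochShift M 1 (cexp (ξ * I)) ^ 2)) := by
  ext i j
  rw [Ahat, exp_neg_mul_I_eq_star, blochShift_one_sq hM]
  simp only [Matrix.add_apply, Matrix.sub_apply, Matrix.smul_apply, transpose_apply, star_apply,
    smul_eq_mul, one_apply, A0_apply, A1_apply hM, blochShift, star_add, star_mul', apply_ite star,
    star_one, star_zero]
  ring

lemma Ahat_eq_sum_star_mul_self (hM : 2 ≤ M) (ξ : ℝ) :
    Ahat M κ1 κ2 ξ =
      (κ1 / 4 : ℂ) • (star ((1 - blochShift M 1 (cexp (ξ * I))) ^ 2)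
        * (1 - blochShift M 1 (cexp (ξ * I))) ^ 2)
      + ((κ1 + 4 * κ2) / 4 : ℂ) • (star (1 - blochShift M 1 (cexp (ξ * I)) ^ 2)
        * (1 - blochShift M 1 (cexp (ξ * I)) ^ 2)) := by
  rw [Ahat_eq_blochShift hM, isometry_symbol_eq_sum_star_mul_self
    (star_blochShift_one_mul_self (exp_mul_I_mul_star_self ξ))]

lemma posSemidef_Ahat (hM : 2 ≤ M) (h1 : 0 ≤ κ1) (h2 : 0 ≤ κ1 + 4 * κ2) (ξ : ℝ) :
    (Ahat M κ1 κ2 ξ).PosSemidef := by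
  rw [Ahat_eq_sum_star_mul_self hM]
  exact ((posSemidef_conjTranspose_mul_self _).smul (by norm_cast; positivity)).add
    ((posSemidef_conjTranspose_mul_self _).smul (by norm_cast; positivity))

lemma blochShift_mulVec_eq_of_Ahat_mulVec_eq_zero (hM : 2 ≤ M) (h1 : 0 < κ1)
    (h2 : 0 < κ1 + 4 * κ2) {ξ : ℝ} {v : Fin M → ℂ} (hv : Ahat M κ1 κ2 ξ *ᵥ v = 0) :
    blochShift M 1 (cexp (ξ * I)) *ᵥ v = v := by
  have ha : (0 : ℂ) < κ1 / 4 := by norm_cast; positivity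
  have hb : (0 : ℂ) < (κ1 + 4 * κ2) / 4 := by norm_cast; positivity
  rw [Ahat_eq_sum_star_mul_self hM, star_eq_conjTranspose, star_eq_conjTranspose,
    mulVec_add_eq_zero_iff_of_posSemidef ((posSemidef_conjTranspose_mul_self _).smul ha.le)
      ((posSemidef_conjTranspose_mul_self _).smul hb.le), smul_mulVec, smul_mulVec,
    smul_eq_zero_iff_right ha.ne', smul_eq_zero_iff_right hb.ne',
    conjTranspose_mul_self_mulVec_eq_zero, conjTranspose_mul_self_mulVec_eq_zero] at hv
  obtain ⟨hsq, hsub⟩ := hv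
  set S := blochShift M 1 (cexp (ξ * I))
  have htwo : (2 : ℂ) • (1 - S) = (1 - S) ^ 2 + (1 - S ^ 2) := by
    rw [two_smul]; noncomm_ring
  have hker : (2 : ℂ) • ((1 - S) *ᵥ v) = 0 := by
    rw [← smul_mulVec, htwo, add_mulVec, hsq, hsub, add_zero]
  rw [smul_eq_zero_iff_right two_ne_zero, sub_mulVec, one_mulVec, sub_eq_zero] at hker
  exact hker.symm

lemma det_Ahat_ne_zero (hM : 2 ≤ M) (h1 : 0 < κ1) (h2 : 0 < κ1 + 4 * κ2) {ξ : ℝ}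
    (hξ : cexp (ξ * I) ≠ 1) : (Ahat M κ1 κ2 ξ).det ≠ 0 := by
  rw [Ne, ← exists_mulVec_eq_zero_iff]
  rintro ⟨v, hv, hv0⟩
  exact hv <| eq_zero_of_blochShift_one_mulVec_eq hξ <|
    blochShift_mulVec_eq_of_Ahat_mulVec_eq_zero hM h1 h2 hv0

lemma star_q1 : star (q1 M) = q1 M := by
  ext i
  simp [q1]

lemma q1_ne_zero (hM : M ≠ 0) : q1 M ≠ 0 := fun h => by
  simpa [q1, hM] using congrFun h ⟨0, Nat.pos_of_ne_zero hM⟩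

lemma posDef_Ahat_add_vecMulVec_q1 (hM : 2 ≤ M) (h1 : 0 < κ1) (h2 : 0 < κ1 + 4 * κ2) (ξ : ℝ) :
    (Ahat M κ1 κ2 ξ + vecMulVec (q1 M) (star (q1 M))).PosDef := by
  refine posDef_add_vecMulVec_star (posSemidef_Ahat hM h1.le h2.le ξ) fun v hv hq => ?_
  have hconst : ∀ i, v i = v ⟨0, by omega⟩ := apply_eq_apply_zero_of_blochShift_one_mulVec_eq
    (blochShift_mulVec_eq_of_Ahat_mulVec_eq_zero hM h1 h2 hv)
  have hM0 : M ≠ 0 := by omega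
  rw [star_q1, funext hconst] at hq
  have hzero : v ⟨0, by omega⟩ = 0 := by simpa [dotProduct, q1, hM0] using hq
  exact funext fun i => (hconst i).trans hzero

lemma contDiff_Ahat_apply {n : WithTop ℕ∞} (i j : Fin M) :
    ContDiff ℝ n fun ξ => Ahat M κ1 κ2 ξ i j := by
  have hcast : ContDiff ℝ n fun ξ : ℝ => (ξ : ℂ) := Complex.ofRealCLM.contDiff
  have hexp : ContDiff ℝ n fun ξ : ℝ => cexp (ξ * I) := (hcast.mul contDiff_const).cexp
  have hexp_neg : ContDiff ℝ n fun ξ : ℝ => cexp (-ξ * I) := (hcast.neg.mul contDiff_const).cexp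
  simp only [Ahat, Matrix.add_apply, Matrix.smul_apply, smul_eq_mul]
  exact (contDiff_const.add (hexp_neg.mul contDiff_const)).add (hexp.mul contDiff_const)

lemma Ahat_periodic : Function.Periodic (Ahat M κ1 κ2) (2 * π) := fun ξ => by
  have hexp : cexp ((ξ + 2 * π : ℝ) * I) = cexp (ξ * I) := by
    push_cast
    exact Complex.exp_mul_I_periodic ξ
  simp only [Ahat, exp_neg_mul_I_eq_star, hexp]

lemma Ahat_neg (ξ : ℝ) : Ahat M κ1 κ2 (-ξ) = (Ahat M κ1 κ2 ξ)ᵀ := by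
  simp only [Ahat, transpose_add, transpose_smul, transpose_transpose, A0_transpose,
    Complex.ofReal_neg, neg_neg]
  exact add_right_comm _ _ _

lemma Ahat_two_pi_sub (ξ : ℝ) : Ahat M κ1 κ2 (2 * π - ξ) = (Ahat M κ1 κ2 ξ)ᵀ := by
  rw [Ahat_periodic.sub_eq', Ahat_neg]

end Ahat

open scoped ContDiff in
theorem F_extends_smoothly_general (M : ℕ) (hM : 2 ≤ M) (κ1 κ2 : ℝ)
    (h1 : 0 < κ1) (h2 : 0 < κ1 + 4 * κ2) :
    ∃ G : ℝ → ℝ, ContDiff ℝ ω G ∧ (∀ ξ, G (ξ + 2 * Real.pi) = G ξ) ∧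
      (∀ ξ, G (2 * Real.pi - ξ) = G ξ) ∧
      ∀ ξ : ℝ, cexp (ξ * I) ≠ 1 →
        (G ξ : ℂ) = (star (q1 M) ⬝ᵥ ((Ahat M κ1 κ2 ξ)⁻¹ *ᵥ q1 M))⁻¹ := by
  have hq : q1 M ≠ 0 := q1_ne_zero (by omega)
  have hB := posDef_Ahat_add_vecMulVec_q1 hM h1 h2
  refine ⟨fun ξ => (cramerQuotient (Ahat M κ1 κ2 ξ) (q1 M)).re, ?_, fun ξ => ?_, fun ξ => ?_,
    fun ξ hξ => ?_⟩
  · exact Complex.reCLM.contDiff.comp (contDiff_cramerQuotient contDiff_Ahat_apply hq hB)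
  · simp only [Ahat_periodic ξ]
  · beta_reduce
    rw [Ahat_two_pi_sub, ← cramerQuotient_transpose (Ahat M κ1 κ2 ξ), star_q1]
  · rw [inv_dotProduct_inv_mulVec_eq_cramerQuotient (det_Ahat_ne_zero hM h1 h2 hξ)]
    exact (Complex.eq_re_of_ofReal_le
      (cramerQuotient_nonneg (posSemidef_Ahat hM h1.le h2.le ξ) hq (hB ξ))).symm

theorem F_extends_smoothly (M : ℕ) (hM : 3 ≤ M) (κ1 κ2 : ℝ)
    (h1 : 0 < κ1) (h2 : 0 < κ1 + 4 * κ2) :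
    ∃ G : ℝ → ℝ, ContDiff ℝ (⊤ : ℕ∞) G ∧ (∀ ξ, G (ξ + 2 * Real.pi) = G ξ) ∧
      (∀ ξ, G (2 * Real.pi - ξ) = G ξ) ∧
      ∀ ξ ∈ Set.Ioo (0 : ℝ) (2 * Real.pi),
        (G ξ : ℂ) = (star (q1 M) ⬝ᵥ ((Ahat M κ1 κ2 ξ)⁻¹ *ᵥ q1 M))⁻¹ := by
  obtain ⟨G, hG, hper, hrefl, heq⟩ := F_extends_smoothly_general M (by omega) κ1 κ2 h1 h2
  exact ⟨G, hG.of_le le_top, hper, hrefl, fun ξ hξ => heq ξ (exp_mul_I_ne_one_of_mem_Ioo hξ)⟩
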